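/- arXiv:1404.2289 — 4 statements merged into one kernel-verified Lean document; each statement's English description precedes it below -/
import Mathlib

section
/- (Claim 1 of the MCE NP-completeness reduction.) Let φ be a 3-CNF formula with n ≥ 1 variables and m ≥ 1 clauses, and consider its MCE gadget graph. If σ : {1,…,n} → Bool is a satisfying assignment of φ, then the selection R = ⋃_{i : σ(x_i) = true} P_i ∪ ⋃_{i : σ(x_i) = false} N_i is a union of classes, R connects the source u_1 to the sink b_m, and the total weight of R is exactly n (in particular at most n). -/
/-- A literal over variables `x_1, …, x_n` (indexed by `Fin n`): a variable
index together with a polarity (`true` for `x_i`, `false` for `¬x_i`). -/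
structure Lit (n : ℕ) where
  var : Fin n
  pos : Bool
  deriving DecidableEq

/-- A 3-CNF formula with `n` variables and `m` clauses: clause `j` has three
literals, indexed by `Fin 3`. -/
def CnfFormula (n m : ℕ) := Fin m → Fin 3 → Lit n

/-- The assignment `σ` satisfies the formula `φ`: every clause contains a
literal made true by `σ`. -/
def Satisfies {n m : ℕ} (φ : CnfFormula n m) (σ : Fin n → Bool) : Prop :=
  ∀ j : Fin m, ∃ k : Fin 3, σ (φ j k).var = (φ j k).pos

/-- The nodes of the MCE gadget graph: six nodes per variable gadget and
eight nodes per clause gadget. -/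
inductive MceNode (n m : ℕ) : Type
  | u  : Fin n → MceNode n m
  | ut : Fin n → MceNode n m
  | vt : Fin n → MceNode n m
  | uf : Fin n → MceNode n m
  | vf : Fin n → MceNode n m
  | v  : Fin n → MceNode n m
  | a  : Fin m → MceNode n m
  | ak : Fin m → Fin 3 → MceNode n m
  | bk : Fin m → Fin 3 → MceNode n m
  | b  : Fin m → MceNode n m
  deriving DecidableEq, Fintype

/-- The solid (always present) edges of the MCE gadget graph. -/
inductive SolidEdge (n m : ℕ) : MceNode n m → MceNode n m → Prop
  | u_ut (i : Fin n) : SolidEdge n m (.u i) (.ut i)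
  | u_uf (i : Fin n) : SolidEdge n m (.u i) (.uf i)
  | vt_v (i : Fin n) : SolidEdge n m (.vt i) (.v i)
  | vf_v (i : Fin n) : SolidEdge n m (.vf i) (.v i)
  | a_ak (j : Fin m) (k : Fin 3) : SolidEdge n m (.a j) (.ak j k)
  | bk_b (j : Fin m) (k : Fin 3) : SolidEdge n m (.bk j k) (.b j)
  | v_u (i i' : Fin n) (h : (i : ℕ) + 1 = (i' : ℕ)) : SolidEdge n m (.v i) (.u i')
  | v_a (i : Fin n) (j : Fin m) (hi : (i : ℕ) + 1 = n) (hj : (j : ℕ) = 0) :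
      SolidEdge n m (.v i) (.a j)
  | b_a (j j' : Fin m) (h : (j : ℕ) + 1 = (j' : ℕ)) : SolidEdge n m (.b j) (.a j')

/-- The class `P_i` of candidate edges: the variable edge `(u_i^t, v_i^t)`
together with every clause edge `(a_j^k, b_j^k)` whose literal is `x_i`. -/
def Pclass {n m : ℕ} (φ : CnfFormula n m) (i : Fin n) :
    Finset (MceNode n m × MceNode n m) :=
  {(MceNode.ut i, MceNode.vt i)} ∪
    ((Finset.univ : Finset (Fin m × Fin 3)).filter
        (fun jk => φ jk.1 jk.2 = ⟨i, true⟩)).image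
      (fun jk => (MceNode.ak jk.1 jk.2, MceNode.bk jk.1 jk.2))

/-- The class `N_i` of candidate edges: the variable edge `(u_i^f, v_i^f)`
together with every clause edge `(a_j^k, b_j^k)` whose literal is `¬x_i`. -/
def Nclass {n m : ℕ} (φ : CnfFormula n m) (i : Fin n) :
    Finset (MceNode n m × MceNode n m) :=
  {(MceNode.uf i, MceNode.vf i)} ∪
    ((Finset.univ : Finset (Fin m × Fin 3)).filter
        (fun jk => φ jk.1 jk.2 = ⟨i, false⟩)).image
      (fun jk => (MceNode.ak jk.1 jk.2, MceNode.bk jk.1 jk.2))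

/-- The set `Ê` of all candidate edges. -/
def Ehat {n m : ℕ} (φ : CnfFormula n m) : Finset (MceNode n m × MceNode n m) :=
  (Finset.univ : Finset (Fin n)).biUnion (fun i => Pclass φ i ∪ Nclass φ i)

/-- The weight of a candidate edge: `1` for the variable-gadget edges
`(u_i^t, v_i^t)` and `(u_i^f, v_i^f)`, `0` for the clause-gadget edges. -/
def edgeWeight {n m : ℕ} : MceNode n m × MceNode n m → ℕ
  | (MceNode.ut _, MceNode.vt _) => 1
  | (MceNode.uf _, MceNode.vf _) => 1
  | _ => 0

/-- The total weight of a selection of candidate edges. -/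
def selWeight {n m : ℕ} (R : Finset (MceNode n m × MceNode n m)) : ℕ :=
  ∑ e ∈ R, edgeWeight e

/-- `R` is a union of classes: whenever it meets a class `P_i` or `N_i`, it
contains the whole class. -/
def IsUnionOfClasses {n m : ℕ} (φ : CnfFormula n m)
    (R : Finset (MceNode n m × MceNode n m)) : Prop :=
  ∀ i : Fin n,
    ((Pclass φ i ∩ R).Nonempty → Pclass φ i ⊆ R) ∧
    ((Nclass φ i ∩ R).Nonempty → Nclass φ i ⊆ R)

/-- `R` connects the source `u_1` to the sink `b_m`: there is a directed path
from `u_1` to `b_m` using solid edges together with the edges of `R`. -/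
def Connects {n m : ℕ} (hn : 0 < n) (hm : 0 < m)
    (R : Finset (MceNode n m × MceNode n m)) : Prop :=
  Relation.ReflTransGen (fun x y => SolidEdge n m x y ∨ (x, y) ∈ R)
    (MceNode.u ⟨0, hn⟩) (MceNode.b ⟨m - 1, Nat.sub_lt hm Nat.one_pos⟩)

/-- The selection associated with an assignment. -/
def selR {n m : ℕ} (φ : CnfFormula n m) (σ : Fin n → Bool) :
    Finset (MceNode n m × MceNode n m) :=
  (Finset.univ : Finset (Fin n)).biUnion
    (fun i => if σ i then Pclass φ i else Nclass φ i)

theorem mem_Pclass {n m : ℕ} (φ : CnfFormula n m) (i : Fin n)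
    (e : MceNode n m × MceNode n m) :
    e ∈ Pclass φ i ↔ e = (MceNode.ut i, MceNode.vt i) ∨
      ∃ j k, φ j k = ⟨i, true⟩ ∧ (MceNode.ak j k, MceNode.bk j k) = e := by
  simp [Pclass]

theorem mem_Nclass {n m : ℕ} (φ : CnfFormula n m) (i : Fin n)
    (e : MceNode n m × MceNode n m) :
    e ∈ Nclass φ i ↔ e = (MceNode.uf i, MceNode.vf i) ∨
      ∃ j k, φ j k = ⟨i, false⟩ ∧ (MceNode.ak j k, MceNode.bk j k) = e := by
  simp [Nclass]

theorem mem_selR {n m : ℕ} (φ : CnfFormula n m) (σ : Fin n → Bool)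
    (e : MceNode n m × MceNode n m) :
    e ∈ selR φ σ ↔ ∃ i, (σ i = true ∧ e ∈ Pclass φ i) ∨ (σ i = false ∧ e ∈ Nclass φ i) := by
  simp only [selR, Finset.mem_biUnion, Finset.mem_univ, true_and]
  refine exists_congr fun i => ?_
  cases h : σ i <;> simp

theorem selR_subset {n m : ℕ} (φ : CnfFormula n m) (σ : Fin n → Bool) :
    selR φ σ ⊆ Ehat φ := by
  intro e he
  obtain ⟨i, h⟩ := (mem_selR φ σ e).1 he
  simp only [Ehat, Finset.mem_biUnion, Finset.mem_univ, true_and, Finset.mem_union]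
  exact ⟨i, h.imp And.right And.right⟩

theorem selR_union {n m : ℕ} (φ : CnfFormula n m) (σ : Fin n → Bool) :
    IsUnionOfClasses φ (selR φ σ) := by
  intro i
  constructor
  · rintro ⟨e, he⟩ f hf
    rw [Finset.mem_inter, mem_selR] at he
    obtain ⟨h1, i', h2⟩ := he
    rw [mem_selR]
    refine ⟨i, Or.inl ⟨?_, hf⟩⟩
    rw [mem_Pclass] at h1 h2
    rw [mem_Nclass] at h2
    rcases h1 with rfl | ⟨j, k, hjk, rfl⟩
    · simp at h2
      grind
    · simp at h2
      grind
  · rintro ⟨e, he⟩ f hf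
    rw [Finset.mem_inter, mem_selR] at he
    obtain ⟨h1, i', h2⟩ := he
    rw [mem_selR]
    refine ⟨i, Or.inr ⟨?_, hf⟩⟩
    rw [mem_Nclass] at h1 h2
    rw [mem_Pclass] at h2
    rcases h1 with rfl | ⟨j, k, hjk, rfl⟩
    · simp at h2
      grind
    · simp at h2
      grind

theorem selR_weight {n m : ℕ} (φ : CnfFormula n m) (σ : Fin n → Bool) :
    selWeight (selR φ σ) = n := by
  classical
  let f : Fin n → MceNode n m × MceNode n m := fun i =>
    if σ i then (MceNode.ut i, MceNode.vt i) else (MceNode.uf i, MceNode.vf i)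
  have hf : Function.Injective f := by
    intro i j h
    simp only [f] at h
    split_ifs at h <;> simp_all
  have hsub : Finset.univ.image f ⊆ selR φ σ := by
    intro e he
    obtain ⟨i, -, rfl⟩ := Finset.mem_image.1 he
    rw [mem_selR]
    refine ⟨i, ?_⟩
    rw [mem_Pclass, mem_Nclass]
    cases h : σ i <;> simp [f, h]
  unfold selWeight
  rw [← Finset.sum_subset hsub, Finset.sum_image (fun _ _ _ _ h => hf h)]
  · have : ∀ i, edgeWeight (f i) = 1 := by
      intro i
      cases h : σ i <;> simp [f, h, edgeWeight]
    simp [this]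
  · intro e he hne
    obtain ⟨i, h⟩ := (mem_selR φ σ e).1 he
    rw [mem_Pclass, mem_Nclass] at h
    rcases h with ⟨hi, rfl | ⟨j, k, -, rfl⟩⟩ | ⟨hi, rfl | ⟨j, k, -, rfl⟩⟩
    · exact absurd (Finset.mem_image.2 ⟨i, Finset.mem_univ _, by simp [f, hi]⟩) hne
    · rfl
    · exact absurd (Finset.mem_image.2 ⟨i, Finset.mem_univ _, by simp [f, hi]⟩) hne
    · rfl

theorem selR_connects {n m : ℕ} (hn : 0 < n) (hm : 0 < m)
    (φ : CnfFormula n m) (σ : Fin n → Bool) (hσ : Satisfies φ σ) :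
    Connects hn hm (selR φ σ) := by
  unfold Connects
  set r : MceNode n m → MceNode n m → Prop :=
    fun x y => SolidEdge n m x y ∨ (x, y) ∈ selR φ σ with hr
  have hs : ∀ {x y}, SolidEdge n m x y → r x y := fun h => Or.inl h
  have hvar : ∀ i, Relation.ReflTransGen r (.u i) (.v i) := by
    intro i
    cases h : σ i
    · have e : r (.uf i) (.vf i) :=
        Or.inr ((mem_selR _ _ _).2 ⟨i, Or.inr ⟨h, (mem_Nclass _ _ _).2 (Or.inl rfl)⟩⟩)
      exact ((Relation.ReflTransGen.single (hs (SolidEdge.u_uf i))).tail e).tail (hs (SolidEdge.vf_v i))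
    · have e : r (.ut i) (.vt i) :=
        Or.inr ((mem_selR _ _ _).2 ⟨i, Or.inl ⟨h, (mem_Pclass _ _ _).2 (Or.inl rfl)⟩⟩)
      exact ((Relation.ReflTransGen.single (hs (SolidEdge.u_ut i))).tail e).tail (hs (SolidEdge.vt_v i))
  have hcl : ∀ j, Relation.ReflTransGen r (.a j) (.b j) := by
    intro j
    obtain ⟨k, hk⟩ := hσ j
    have e : r (.ak j k) (.bk j k) := by
      refine Or.inr ((mem_selR _ _ _).2 ⟨(φ j k).var, ?_⟩)
      rw [mem_Pclass, mem_Nclass, hk]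
      cases hp : (φ j k).pos
      · exact Or.inr ⟨rfl, Or.inr ⟨j, k, by rw [← hp], rfl⟩⟩
      · exact Or.inl ⟨rfl, Or.inr ⟨j, k, by rw [← hp], rfl⟩⟩
    exact ((Relation.ReflTransGen.single (hs (SolidEdge.a_ak j k))).tail e).tail (hs (SolidEdge.bk_b j k))
  have h1 : ∀ (i : ℕ) (hi : i < n), Relation.ReflTransGen r (.u ⟨0, hn⟩) (.v ⟨i, hi⟩) := by
    intro i
    induction i with
    | zero => intro hi; exact hvar _
    | succ i ih =>
      intro hi
      exact ((ih (by omega)).tail (hs (SolidEdge.v_u _ ⟨i + 1, hi⟩ rfl))).trans (hvar _)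
  have h2 : ∀ (j : ℕ) (hj : j < m), Relation.ReflTransGen r (.u ⟨0, hn⟩) (.b ⟨j, hj⟩) := by
    intro j
    induction j with
    | zero =>
      intro hj
      exact ((h1 (n - 1) (by omega)).tail
        (hs (SolidEdge.v_a _ ⟨0, hj⟩ (Nat.sub_add_cancel hn) rfl))).trans (hcl _)
    | succ j ih =>
      intro hj
      exact ((ih (by omega)).tail (hs (SolidEdge.b_a _ ⟨j + 1, hj⟩ rfl))).trans (hcl _)
  exact h2 _ _

/-- Claim 1 of the MCE NP-completeness reduction: a satisfying assignment
`σ` of `φ` yields the selection `R = ⋃_{σ i} P_i ∪ ⋃_{¬σ i} N_i`, which is a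
subset of `Ê`, a union of classes, connects the source to the sink, and has
total weight exactly `n`. -/
theorem mce_claim1 {n m : ℕ} (hn : 0 < n) (hm : 0 < m)
    (φ : CnfFormula n m) (σ : Fin n → Bool) (hσ : Satisfies φ σ) :
    let R : Finset (MceNode n m × MceNode n m) :=
      (Finset.univ : Finset (Fin n)).biUnion
        (fun i => if σ i then Pclass φ i else Nclass φ i)
    R ⊆ Ehat φ ∧ IsUnionOfClasses φ R ∧ Connects hn hm R ∧ selWeight R = n := by
  exact ⟨selR_subset φ σ, selR_union φ σ, selR_connects hn hm φ σ hσ, selR_weight φ σ⟩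
end

section
/- (Claim 2 of the MCE NP-completeness reduction.) Let φ be a 3-CNF formula with n ≥ 1 variables and m ≥ 1 clauses, and consider its MCE gadget graph. If R ⊆ Ê is a union of classes of total weight at most n that connects the source u_1 to the sink b_m, then φ is satisfiable; in particular, for each i exactly one of P_i ⊆ R and N_i ⊆ R holds, and the assignment σ with σ(x_i) = true iff P_i ⊆ R satisfies φ. -/
def mceS {n m : ℕ} (R : Finset (MceNode n m × MceNode n m)) (i : Fin n) : Prop :=
  (MceNode.ut i, MceNode.vt i) ∈ R ∨ (MceNode.uf i, MceNode.vf i) ∈ R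

def mceT {n m : ℕ} (R : Finset (MceNode n m × MceNode n m)) (j : Fin m) : Prop :=
  ∃ k : Fin 3, (MceNode.ak j k, MceNode.bk j k) ∈ R

/-- Invariant holding at every node reachable from the source. -/
def mceInv {n m : ℕ} (R : Finset (MceNode n m × MceNode n m)) : MceNode n m → Prop
  | .u i => ∀ i', i' < i → mceS R i'
  | .ut i => ∀ i', i' < i → mceS R i'
  | .uf i => ∀ i', i' < i → mceS R i'
  | .vt i => ∀ i', i' ≤ i → mceS R i'
  | .vf i => ∀ i', i' ≤ i → mceS R i'
  | .v i => ∀ i', i' ≤ i → mceS R i'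
  | .a j => (∀ i, mceS R i) ∧ ∀ j', j' < j → mceT R j'
  | .ak j _ => (∀ i, mceS R i) ∧ ∀ j', j' < j → mceT R j'
  | .bk j _ => (∀ i, mceS R i) ∧ ∀ j', j' ≤ j → mceT R j'
  | .b j => (∀ i, mceS R i) ∧ ∀ j', j' ≤ j → mceT R j'

lemma mce_edge_cases {n m : ℕ} (φ : CnfFormula n m) (e : MceNode n m × MceNode n m)
    (he : e ∈ Ehat φ) :
    (∃ i, e = (.ut i, .vt i)) ∨ (∃ i, e = (.uf i, .vf i)) ∨ ∃ j k, e = (.ak j k, .bk j k) := by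
  simp only [Ehat, Pclass, Nclass, Finset.mem_biUnion, Finset.mem_union, Finset.mem_singleton,
    Finset.mem_image] at he
  obtain ⟨i, -, (h | ⟨jk, -, h⟩) | (h | ⟨jk, -, h⟩)⟩ := he
  · exact .inl ⟨i, h⟩
  · exact .inr (.inr ⟨_, _, h.symm⟩)
  · exact .inr (.inl ⟨i, h⟩)
  · exact .inr (.inr ⟨_, _, h.symm⟩)

lemma mce_inv_step {n m : ℕ} (φ : CnfFormula n m) (R : Finset (MceNode n m × MceNode n m))
    (hsub : R ⊆ Ehat φ) (x y : MceNode n m) (h : SolidEdge n m x y ∨ (x, y) ∈ R)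
    (hx : mceInv R x) : mceInv R y := by
  rcases h with h | h
  · cases h with
    | u_ut i => exact hx
    | u_uf i => exact hx
    | vt_v i => exact hx
    | vf_v i => exact hx
    | a_ak j k => exact hx
    | bk_b j k => exact hx
    | v_u i i' h =>
      intro l hl
      exact hx l (by rw [Fin.lt_def] at hl; rw [Fin.le_def]; omega)
    | v_a i j hi hj =>
      refine ⟨fun l => hx l (by rw [Fin.le_def]; omega), fun l hl => ?_⟩
      rw [Fin.lt_def] at hl; omega
    | b_a j j' h =>
      refine ⟨hx.1, fun l hl => hx.2 l (by rw [Fin.lt_def] at hl; rw [Fin.le_def]; omega)⟩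
  · rcases mce_edge_cases φ _ (hsub h) with ⟨i, e⟩ | ⟨i, e⟩ | ⟨j, k, e⟩
    · obtain ⟨rfl, rfl⟩ := Prod.mk.inj e
      intro l hl
      rcases hl.lt_or_eq with hl | rfl
      · exact hx l hl
      · exact .inl h
    · obtain ⟨rfl, rfl⟩ := Prod.mk.inj e
      intro l hl
      rcases hl.lt_or_eq with hl | rfl
      · exact hx l hl
      · exact .inr h
    · obtain ⟨rfl, rfl⟩ := Prod.mk.inj e
      refine ⟨hx.1, fun l hl => ?_⟩
      rcases hl.lt_or_eq with hl | rfl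
      · exact hx.2 l hl
      · exact ⟨k, h⟩

lemma mce_not_both {n m : ℕ} (R : Finset (MceNode n m × MceNode n m))
    (hweight : selWeight R ≤ n) (hS : ∀ i, mceS R i) (i : Fin n)
    (hp : ((MceNode.ut i, MceNode.vt i) : MceNode n m × MceNode n m) ∈ R)
    (hq : ((MceNode.uf i, MceNode.vf i) : MceNode n m × MceNode n m) ∈ R) : False := by
  classical
  let f : Fin n → MceNode n m × MceNode n m := fun l =>
    if (MceNode.ut l, MceNode.vt l) ∈ R then (MceNode.ut l, MceNode.vt l)
    else (MceNode.uf l, MceNode.vf l)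
  have hf : Function.Injective f := by
    intro a b hab
    simp only [f] at hab
    split_ifs at hab <;> simp_all
  let A := insert (MceNode.uf i, MceNode.vf i) (Finset.univ.image f)
  have hA : A.card = n + 1 := by
    rw [Finset.card_insert_of_notMem, Finset.card_image_of_injective _ hf]
    · simp
    · simp only [Finset.mem_image, not_exists, not_and, f]
      intro l _ h
      split_ifs at h <;> simp_all
  have hAR : A ⊆ R := by
    intro e he
    simp only [A, Finset.mem_insert, Finset.mem_image] at he
    rcases he with rfl | ⟨l, -, rfl⟩
    · exact hq
    · simp only [f]
      split_ifs with h
      · exact h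
      · exact (hS l).resolve_left h
  have hw : ∑ e ∈ A, edgeWeight e = A.card := by
    rw [Finset.card_eq_sum_ones]
    refine Finset.sum_congr rfl fun e he => ?_
    simp only [A, Finset.mem_insert, Finset.mem_image] at he
    rcases he with rfl | ⟨l, -, rfl⟩
    · rfl
    · simp only [f]
      split_ifs <;> rfl
  have := Finset.sum_le_sum_of_subset (f := edgeWeight) hAR
  unfold selWeight at hweight
  omega

/-- Claim 2 of the MCE NP-completeness reduction: if a union of classes
`R ⊆ Ê` of total weight at most `n` connects the source to the sink, then for
each `i` exactly one of `P_i ⊆ R` and `N_i ⊆ R` holds, and the assignment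
`σ` with `σ(x_i) = true` iff `P_i ⊆ R` satisfies `φ` (in particular `φ` is
satisfiable). -/
theorem mce_claim2 {n m : ℕ} (hn : 0 < n) (hm : 0 < m)
    (φ : CnfFormula n m) (R : Finset (MceNode n m × MceNode n m))
    (hsub : R ⊆ Ehat φ)
    (hclasses : IsUnionOfClasses φ R)
    (hweight : selWeight R ≤ n)
    (hconn : Connects hn hm R) :
    (∀ i : Fin n,
        (Pclass φ i ⊆ R ∧ ¬ Nclass φ i ⊆ R) ∨
        (¬ Pclass φ i ⊆ R ∧ Nclass φ i ⊆ R)) ∧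
    Satisfies φ (fun i => decide (Pclass φ i ⊆ R)) := by
  have hinv : mceInv R (MceNode.b ⟨m - 1, Nat.sub_lt hm Nat.one_pos⟩) := by
    unfold Connects at hconn
    generalize MceNode.b ⟨m - 1, Nat.sub_lt hm Nat.one_pos⟩ = z at hconn ⊢
    induction hconn with
    | refl => intro l hl; simp [Fin.lt_def] at hl
    | tail _ h ih => exact mce_inv_step φ R hsub _ _ h ih
  obtain ⟨hS, hT⟩ := hinv
  have pin : ∀ i, (MceNode.ut i, MceNode.vt i) ∈ Pclass φ i := fun i => by simp [Pclass]
  have nin : ∀ i, (MceNode.uf i, MceNode.vf i) ∈ Nclass φ i := fun i => by simp [Nclass]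
  have nb : ∀ i, Pclass φ i ⊆ R → Nclass φ i ⊆ R → False := fun i h1 h2 =>
    mce_not_both R hweight hS i (h1 (pin i)) (h2 (nin i))
  refine ⟨fun i => ?_, fun j => ?_⟩
  · rcases hS i with h | h
    · have hP := (hclasses i).1 ⟨_, Finset.mem_inter.2 ⟨pin i, h⟩⟩
      exact .inl ⟨hP, nb i hP⟩
    · have hN := (hclasses i).2 ⟨_, Finset.mem_inter.2 ⟨nin i, h⟩⟩
      exact .inr ⟨fun hP => nb i hP hN, hN⟩
  · obtain ⟨k, hk⟩ := hT j (by rw [Fin.le_def]; simp only; omega)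
    refine ⟨k, ?_⟩
    rcases hl : φ j k with ⟨i, p⟩
    cases p with
    | true =>
      simp only [decide_eq_true_eq]
      refine (hclasses i).1 ⟨_, Finset.mem_inter.2 ⟨?_, hk⟩⟩
      simp [Pclass, hl]
    | false =>
      simp only [decide_eq_false_iff_not]
      refine fun hP => nb i hP ((hclasses i).2 ⟨_, Finset.mem_inter.2 ⟨?_, hk⟩⟩)
      simp [Nclass, hl]
end

section
/- (Weight lower bound in the MCE NP-completeness reduction.) Let φ be a 3-CNF formula with n ≥ 1 variables and m ≥ 1 clauses, and consider its MCE gadget graph. Every selection R ⊆ Ê that is a union of classes and connects the source u_1 to the sink b_m has total weight at least n. -/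
/-- The selection contains one of the two edges of variable gadget `j`. -/
def Crossed {n m : ℕ} (R : Finset (MceNode n m × MceNode n m)) (j : Fin n) : Prop :=
  (MceNode.ut j, MceNode.vt j) ∈ R ∨ (MceNode.uf j, MceNode.vf j) ∈ R

/-- The path invariant: all the variable gadgets before a node were crossed. -/
def PathInv {n m : ℕ} (R : Finset (MceNode n m × MceNode n m)) : MceNode n m → Prop
  | .u i => ∀ j : Fin n, j < i → Crossed R j
  | .ut i => ∀ j : Fin n, j < i → Crossed R j
  | .uf i => ∀ j : Fin n, j < i → Crossed R j
  | .vt i => ∀ j : Fin n, j ≤ i → Crossed R j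
  | .vf i => ∀ j : Fin n, j ≤ i → Crossed R j
  | .v i => ∀ j : Fin n, j ≤ i → Crossed R j
  | _ => ∀ j : Fin n, Crossed R j

theorem mem_Ehat_cases {n m : ℕ} {φ : CnfFormula n m} {e : MceNode n m × MceNode n m}
    (h : e ∈ Ehat φ) :
    (∃ i, e = (MceNode.ut i, MceNode.vt i)) ∨ (∃ i, e = (MceNode.uf i, MceNode.vf i)) ∨
      ∃ j k, e = (MceNode.ak j k, MceNode.bk j k) := by
  simp only [Ehat, Pclass, Nclass, Finset.mem_biUnion, Finset.mem_union, Finset.mem_singleton,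
    Finset.mem_image, Finset.mem_filter, Finset.mem_univ, true_and] at h
  obtain ⟨i, (h | ⟨x, _, h⟩) | (h | ⟨x, _, h⟩)⟩ := h
  · exact Or.inl ⟨i, h⟩
  · exact Or.inr (Or.inr ⟨x.1, x.2, h.symm⟩)
  · exact Or.inr (Or.inl ⟨i, h⟩)
  · exact Or.inr (Or.inr ⟨x.1, x.2, h.symm⟩)

theorem PathInv.step {n m : ℕ} {φ : CnfFormula n m} {R : Finset (MceNode n m × MceNode n m)}
    (hsub : R ⊆ Ehat φ) {x y : MceNode n m} (hx : PathInv R x)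
    (h : SolidEdge n m x y ∨ (x, y) ∈ R) : PathInv R y := by
  rcases h with h | h
  · cases h with
    | v_u i i' h =>
      intro j hj
      exact hx j (by rw [Fin.le_def]; rw [Fin.lt_def] at hj; omega)
    | v_a i j hi hj =>
      intro j
      exact hx j (by rw [Fin.le_def]; omega)
    | _ => exact hx
  · rcases mem_Ehat_cases (hsub h) with ⟨i, e⟩ | ⟨i, e⟩ | ⟨j, k, e⟩
    · obtain ⟨rfl, rfl⟩ := Prod.mk.inj e
      intro j hj
      rcases hj.lt_or_eq with hj | rfl
      · exact hx j hj
      · exact Or.inl h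
    · obtain ⟨rfl, rfl⟩ := Prod.mk.inj e
      intro j hj
      rcases hj.lt_or_eq with hj | rfl
      · exact hx j hj
      · exact Or.inr h
    · obtain ⟨rfl, rfl⟩ := Prod.mk.inj e
      exact hx

/-- Weight lower bound in the MCE NP-completeness reduction: every selection
`R ⊆ Ê` that is a union of classes and connects the source `u_1` to the sink
`b_m` has total weight at least `n`. -/
theorem mce_weight_lower_bound {n m : ℕ} (hn : 0 < n) (hm : 0 < m)
    (φ : CnfFormula n m) (R : Finset (MceNode n m × MceNode n m))
    (hsub : R ⊆ Ehat φ)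
    (hclasses : IsUnionOfClasses φ R)
    (hconn : Connects hn hm R) :
    n ≤ selWeight R := by
  have key : PathInv R (MceNode.b ⟨m - 1, Nat.sub_lt hm Nat.one_pos⟩) := by
    have h0 : PathInv R (MceNode.u ⟨0, hn⟩ : MceNode n m) := by
      intro j hj
      rw [Fin.lt_def] at hj
      exact absurd hj (Nat.not_lt_zero _)
    unfold Connects at hconn
    generalize (MceNode.b ⟨m - 1, Nat.sub_lt hm Nat.one_pos⟩ : MceNode n m) = t at hconn ⊢
    induction hconn with
    | refl => exact h0
    | tail _ hs ih => exact ih.step hsub hs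
  have key' : ∀ j : Fin n, Crossed R j := key
  have hex : ∀ j : Fin n, ∃ e ∈ R, edgeWeight e = 1 ∧
      (e = (MceNode.ut j, MceNode.vt j) ∨ e = (MceNode.uf j, MceNode.vf j)) := by
    intro j
    rcases key' j with h | h
    · exact ⟨_, h, rfl, Or.inl rfl⟩
    · exact ⟨_, h, rfl, Or.inr rfl⟩
  choose f hfR hfw hf using hex
  have hinj : Function.Injective f := by
    intro i j hij
    rcases hf i with h1 | h1 <;> rcases hf j with h2 | h2 <;>
      rw [h1, h2] at hij <;> simp_all
  calc n = ∑ e ∈ Finset.univ.image f, edgeWeight e := by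
        rw [Finset.sum_image (fun a _ b _ h => hinj h)]
        simp [hfw]
    _ ≤ selWeight R := by
        apply Finset.sum_le_sum_of_subset
        intro e he
        obtain ⟨j, _, rfl⟩ := Finset.mem_image.1 he
        exact hfR j
end

section
/- (Correctness of the reduction from 3-CNF-SAT to the Minimal Connecting Edge problem.) Let φ be a 3-CNF formula with n ≥ 1 variables and m ≥ 1 clauses, and consider its MCE gadget graph. Then φ is satisfiable if and only if there exists a selection R ⊆ Ê that is a union of classes, has total weight at most n, and connects the source u_1 to the sink b_m. -/
namespace MceAux

/-- The variable edge selected by the polarity `c`. -/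
def varEdge {n m : ℕ} (c : Bool) (i : Fin n) : MceNode n m × MceNode n m :=
  if c then (.ut i, .vt i) else (.uf i, .vf i)

lemma mem_P {n m : ℕ} (φ : CnfFormula n m) (i : Fin n) (e : MceNode n m × MceNode n m) :
    e ∈ Pclass φ i ↔ e = (.ut i, .vt i) ∨ ∃ j k, φ j k = ⟨i, true⟩ ∧ e = (.ak j k, .bk j k) := by
  simp [Pclass, eq_comm]

lemma mem_N {n m : ℕ} (φ : CnfFormula n m) (i : Fin n) (e : MceNode n m × MceNode n m) :
    e ∈ Nclass φ i ↔ e = (.uf i, .vf i) ∨ ∃ j k, φ j k = ⟨i, false⟩ ∧ e = (.ak j k, .bk j k) := by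
  simp [Nclass, eq_comm]

lemma mem_E {n m : ℕ} (φ : CnfFormula n m) (e : MceNode n m × MceNode n m) :
    e ∈ Ehat φ ↔ (∃ i, e = (.ut i, .vt i)) ∨ (∃ i, e = (.uf i, .vf i)) ∨
      ∃ j k, e = (.ak j k, .bk j k) := by
  simp only [Ehat, Finset.mem_biUnion, Finset.mem_univ, true_and, Finset.mem_union, mem_P, mem_N]
  constructor
  · rintro ⟨i, (h | ⟨j, k, -, h⟩) | (h | ⟨j, k, -, h⟩)⟩
    · exact Or.inl ⟨i, h⟩
    · exact Or.inr (Or.inr ⟨j, k, h⟩)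
    · exact Or.inr (Or.inl ⟨i, h⟩)
    · exact Or.inr (Or.inr ⟨j, k, h⟩)
  · rintro (⟨i, h⟩ | ⟨i, h⟩ | ⟨j, k, h⟩)
    · exact ⟨i, Or.inl (Or.inl h)⟩
    · exact ⟨i, Or.inr (Or.inl h)⟩
    · rcases hl : φ j k with ⟨i, p⟩
      cases p
      · exact ⟨i, Or.inr (Or.inr ⟨j, k, hl, h⟩)⟩
      · exact ⟨i, Or.inl (Or.inr ⟨j, k, hl, h⟩)⟩

lemma weight_varEdge {n m : ℕ} (c : Bool) (i : Fin n) :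
    edgeWeight (varEdge c i : MceNode n m × MceNode n m) = 1 := by
  cases c <;> rfl

lemma varEdge_inj {n m : ℕ} {c d : Bool} {i j : Fin n}
    (h : (varEdge c i : MceNode n m × MceNode n m) = varEdge d j) : c = d ∧ i = j := by
  cases c <;> cases d <;> simp_all [varEdge]

/-- The selection associated with an assignment. -/
def sel {n m : ℕ} (φ : CnfFormula n m) (σ : Fin n → Bool) :
    Finset (MceNode n m × MceNode n m) :=
  (Finset.univ.image fun i => varEdge (σ i) i) ∪
    ((Finset.univ : Finset (Fin m × Fin 3)).filter
        (fun jk => σ (φ jk.1 jk.2).var = (φ jk.1 jk.2).pos)).image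
      (fun jk => (MceNode.ak jk.1 jk.2, MceNode.bk jk.1 jk.2))

lemma mem_sel {n m : ℕ} (φ : CnfFormula n m) (σ : Fin n → Bool)
    (e : MceNode n m × MceNode n m) :
    e ∈ sel φ σ ↔ (∃ i, e = varEdge (σ i) i) ∨
      ∃ j k, σ (φ j k).var = (φ j k).pos ∧ e = (.ak j k, .bk j k) := by
  simp [sel, eq_comm]

lemma sel_weight {n m : ℕ} (φ : CnfFormula n m) (σ : Fin n → Bool) :
    selWeight (sel φ σ) ≤ n := by
  unfold selWeight sel
  refine (Nat.le_add_right _ _).trans (Finset.sum_union_inter).le |>.trans ?_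
  have h2 : ∑ e ∈ ((Finset.univ : Finset (Fin m × Fin 3)).filter
        (fun jk => σ (φ jk.1 jk.2).var = (φ jk.1 jk.2).pos)).image
      (fun jk => ((MceNode.ak jk.1 jk.2, MceNode.bk jk.1 jk.2) : MceNode n m × MceNode n m)),
        edgeWeight e = 0 := by
    apply Finset.sum_eq_zero
    intro e he
    obtain ⟨jk, -, rfl⟩ := Finset.mem_image.1 he
    rfl
  rw [h2, add_zero, Finset.sum_image (fun i _ j _ h => (varEdge_inj h).2)]
  simp [weight_varEdge]

lemma sel_connects {n m : ℕ} (hn : 0 < n) (hm : 0 < m) (φ : CnfFormula n m) (σ : Fin n → Bool)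
    (hσ : Satisfies φ σ) : Connects hn hm (sel φ σ) := by
  set r : MceNode n m → MceNode n m → Prop :=
    fun x y => SolidEdge n m x y ∨ (x, y) ∈ sel φ σ with hr
  have hvar : ∀ i : Fin n, Relation.ReflTransGen r (.u i) (.v i) := by
    intro i
    have hm : varEdge (σ i) i ∈ sel φ σ := (mem_sel ..).2 (Or.inl ⟨i, rfl⟩)
    cases h : σ i
    · rw [h] at hm
      have e1 : r (.u i) (.uf i) := Or.inl (SolidEdge.u_uf i)
      have e2 : r (.uf i) (.vf i) := Or.inr hm
      have e3 : r (.vf i) (.v i) := Or.inl (SolidEdge.vf_v i)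
      exact ((Relation.ReflTransGen.single e1).tail e2).tail e3
    · rw [h] at hm
      have e1 : r (.u i) (.ut i) := Or.inl (SolidEdge.u_ut i)
      have e2 : r (.ut i) (.vt i) := Or.inr hm
      have e3 : r (.vt i) (.v i) := Or.inl (SolidEdge.vt_v i)
      exact ((Relation.ReflTransGen.single e1).tail e2).tail e3
  have hcl : ∀ j : Fin m, Relation.ReflTransGen r (.a j) (.b j) := by
    intro j
    obtain ⟨k, hk⟩ := hσ j
    have hm : (MceNode.ak j k, MceNode.bk j k) ∈ sel φ σ :=
      (mem_sel ..).2 (Or.inr ⟨j, k, hk, rfl⟩)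
    have e1 : r (.a j) (.ak j k) := Or.inl (SolidEdge.a_ak j k)
    have e2 : r (.ak j k) (.bk j k) := Or.inr hm
    have e3 : r (.bk j k) (.b j) := Or.inl (SolidEdge.bk_b j k)
    exact ((Relation.ReflTransGen.single e1).tail e2).tail e3
  have h1 : ∀ i (h : i < n), Relation.ReflTransGen r (.u ⟨0, hn⟩) (.v ⟨i, h⟩) := by
    intro i
    induction i with
    | zero => intro h; exact hvar _
    | succ i ih =>
      intro h
      exact ((ih (by omega)).tail (Or.inl (.v_u _ ⟨i + 1, h⟩ rfl))).trans (hvar _)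
  have h2 : ∀ j (h : j < m), Relation.ReflTransGen r (.u ⟨0, hn⟩) (.b ⟨j, h⟩) := by
    intro j
    induction j with
    | zero =>
      intro h
      exact ((h1 (n - 1) (by omega)).tail
        (Or.inl (.v_a _ ⟨0, h⟩ (by simp; omega) rfl))).trans (hcl _)
    | succ j ih =>
      intro h
      exact ((ih (by omega)).tail (Or.inl (.b_a _ ⟨j + 1, h⟩ rfl))).trans (hcl _)
  exact h2 _ _

/-- Reachability invariant. -/
def Inv {n m : ℕ} (T : Fin n → Prop) (C : Fin m → Prop) : MceNode n m → Prop
  | .u i => ∀ i' < i, T i'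
  | .ut i => ∀ i' < i, T i'
  | .uf i => ∀ i' < i, T i'
  | .vt i => ∀ i' ≤ i, T i'
  | .vf i => ∀ i' ≤ i, T i'
  | .v i => ∀ i' ≤ i, T i'
  | .a j => (∀ i, T i) ∧ ∀ j' < j, C j'
  | .ak j _ => (∀ i, T i) ∧ ∀ j' < j, C j'
  | .bk j _ => (∀ i, T i) ∧ ∀ j' ≤ j, C j'
  | .b j => (∀ i, T i) ∧ ∀ j' ≤ j, C j'

lemma extend_lt {n : ℕ} {T : Fin n → Prop} {i : Fin n} (h : ∀ i' < i, T i') (hi : T i) :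
    ∀ i' ≤ i, T i' := by
  intro i' h'
  rcases h'.lt_or_eq with h' | rfl
  · exact h _ h'
  · exact hi

lemma inv_of_connects {n m : ℕ} (hn : 0 < n) (hm : 0 < m) (φ : CnfFormula n m)
    (R : Finset (MceNode n m × MceNode n m)) (hR : R ⊆ Ehat φ) (hc : Connects hn hm R) :
    (∀ i : Fin n, ∃ c, varEdge c i ∈ R) ∧
      ∀ j : Fin m, ∃ k, (MceNode.ak j k, MceNode.bk j k) ∈ R := by
  have key : ∀ y, Relation.ReflTransGen (fun x y => SolidEdge n m x y ∨ (x, y) ∈ R)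
      (MceNode.u ⟨0, hn⟩) y → Inv (fun i : Fin n => ∃ c, varEdge c i ∈ R)
        (fun j : Fin m => ∃ k, (MceNode.ak j k, MceNode.bk j k) ∈ R) y := by
    intro y hy
    induction hy with
    | refl => intro i' h; exact absurd h (by simp [Fin.lt_def])
    | tail _ hxy ih =>
      rcases hxy with hs | hs
      · cases hs with
        | v_u i i' h => intro x hx; exact ih x (by simp only [Fin.lt_def, Fin.le_def] at *; omega)
        | v_a i j hi hj =>
          refine ⟨fun x => ih x (by simp only [Fin.le_def]; omega), fun x hx => ?_⟩
          simp only [Fin.lt_def] at hx; omega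
        | b_a j j' h =>
          exact ⟨ih.1, fun x hx => ih.2 x (by simp only [Fin.lt_def, Fin.le_def] at *; omega)⟩
        | _ => exact ih
      · rcases (mem_E φ _).1 (hR hs) with ⟨i, h⟩ | ⟨i, h⟩ | ⟨j, k, h⟩
        · obtain ⟨rfl, rfl⟩ := Prod.mk.inj h
          exact extend_lt ih ⟨true, hs⟩
        · obtain ⟨rfl, rfl⟩ := Prod.mk.inj h
          exact extend_lt ih ⟨false, hs⟩
        · obtain ⟨rfl, rfl⟩ := Prod.mk.inj h
          exact ⟨ih.1, extend_lt ih.2 ⟨k, hs⟩⟩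
  obtain ⟨h1, h2⟩ := key _ hc
  exact ⟨h1, fun j => h2 j (by simp only [Fin.le_def]; omega)⟩

lemma unique_pol {n m : ℕ} (R : Finset (MceNode n m × MceNode n m)) (hw : selWeight R ≤ n)
    (σ : Fin n → Bool) (hσ : ∀ i, varEdge (σ i) i ∈ R) (c : Bool) (i : Fin n)
    (hc : varEdge c i ∈ R) : σ i = c := by
  by_contra hne
  have hnot : (varEdge c i : MceNode n m × MceNode n m) ∉
      Finset.univ.image fun i => varEdge (σ i) i := by
    intro h
    obtain ⟨x, -, hx⟩ := Finset.mem_image.1 h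
    obtain ⟨h1, rfl⟩ := varEdge_inj hx
    exact hne h1
  have hsub : insert (varEdge c i) (Finset.univ.image fun i => varEdge (σ i) i) ⊆ R := by
    intro e he
    rcases Finset.mem_insert.1 he with rfl | he
    · exact hc
    · obtain ⟨x, -, rfl⟩ := Finset.mem_image.1 he
      exact hσ x
  have := Finset.sum_le_sum_of_subset (f := edgeWeight) hsub
  rw [Finset.sum_insert hnot, Finset.sum_image (fun i _ j _ h => (varEdge_inj h).2)] at this
  simp only [weight_varEdge, Finset.sum_const, Finset.card_univ, Fintype.card_fin,
    smul_eq_mul, mul_one] at this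
  unfold selWeight at hw
  omega

lemma sel_union {n m : ℕ} (φ : CnfFormula n m) (σ : Fin n → Bool) :
    IsUnionOfClasses φ (sel φ σ) := by
  intro i
  constructor
  · rintro ⟨e, he⟩
    rw [Finset.mem_inter, mem_P, mem_sel] at he
    have hi : σ i = true := by
      obtain ⟨rfl | ⟨j, k, h, rfl⟩, ⟨x, hx⟩ | ⟨j', k', h', hx⟩⟩ := he
      · exact (varEdge_inj (c := true) hx).2 ▸ (varEdge_inj (c := true) hx).1.symm
      · simp at hx
      · cases hs : σ x <;> simp [hs, varEdge] at hx
      · simp only [Prod.mk.injEq, MceNode.ak.injEq] at hx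
        obtain ⟨⟨rfl, rfl⟩, -⟩ := hx
        simpa [h] using h'
    intro e he
    rw [mem_sel]
    rcases (mem_P ..).1 he with rfl | ⟨j, k, h, rfl⟩
    · exact Or.inl ⟨i, by simp [hi, varEdge]⟩
    · exact Or.inr ⟨j, k, by simp [h, hi], rfl⟩
  · rintro ⟨e, he⟩
    rw [Finset.mem_inter, mem_N, mem_sel] at he
    have hi : σ i = false := by
      obtain ⟨rfl | ⟨j, k, h, rfl⟩, ⟨x, hx⟩ | ⟨j', k', h', hx⟩⟩ := he
      · exact (varEdge_inj (c := false) hx).2 ▸ (varEdge_inj (c := false) hx).1.symm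
      · simp at hx
      · cases hs : σ x <;> simp [hs, varEdge] at hx
      · simp only [Prod.mk.injEq, MceNode.ak.injEq] at hx
        obtain ⟨⟨rfl, rfl⟩, -⟩ := hx
        simpa [h] using h'
    intro e he
    rw [mem_sel]
    rcases (mem_N ..).1 he with rfl | ⟨j, k, h, rfl⟩
    · exact Or.inl ⟨i, by simp [hi, varEdge]⟩
    · exact Or.inr ⟨j, k, by simp [h, hi], rfl⟩

end MceAux

/-- Correctness of the reduction from 3-CNF-SAT to the Minimal Connecting
Edge problem: `φ` is satisfiable iff there is a selection `R ⊆ Ê` that is a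
union of classes, has total weight at most `n`, and connects the source `u_1`
to the sink `b_m`. -/
theorem mce_reduction_correct {n m : ℕ} (hn : 0 < n) (hm : 0 < m)
    (φ : CnfFormula n m) :
    (∃ σ : Fin n → Bool, Satisfies φ σ) ↔
      ∃ R : Finset (MceNode n m × MceNode n m),
        R ⊆ Ehat φ ∧ IsUnionOfClasses φ R ∧ selWeight R ≤ n ∧
          Connects hn hm R := by
  constructor
  · rintro ⟨σ, hσ⟩
    refine ⟨MceAux.sel φ σ, ?_, MceAux.sel_union φ σ, MceAux.sel_weight φ σ,
      MceAux.sel_connects hn hm φ σ hσ⟩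
    intro e he
    rw [MceAux.mem_E]
    rcases (MceAux.mem_sel ..).1 he with ⟨i, rfl⟩ | ⟨j, k, -, rfl⟩
    · cases σ i
      · exact Or.inr (Or.inl ⟨i, rfl⟩)
      · exact Or.inl ⟨i, rfl⟩
    · exact Or.inr (Or.inr ⟨j, k, rfl⟩)
  · rintro ⟨R, hR, hU, hw, hc⟩
    obtain ⟨hT, hC⟩ := MceAux.inv_of_connects hn hm φ R hR hc
    choose σ hσ using hT
    refine ⟨σ, fun j => ?_⟩
    obtain ⟨k, hk⟩ := hC j
    refine ⟨k, MceAux.unique_pol R hw σ hσ _ _ ?_⟩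
    rcases hl : φ j k with ⟨i, p⟩
    cases p
    · exact (hU i).2 ⟨_, Finset.mem_inter.2
        ⟨(MceAux.mem_N ..).2 (Or.inr ⟨j, k, hl, rfl⟩), hk⟩⟩ ((MceAux.mem_N ..).2 (Or.inl rfl))
    · exact (hU i).1 ⟨_, Finset.mem_inter.2
        ⟨(MceAux.mem_P ..).2 (Or.inr ⟨j, k, hl, rfl⟩), hk⟩⟩ ((MceAux.mem_P ..).2 (Or.inl rfl))
end
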